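/- arXiv:2305.04285 — 2 statements merged into one kernel-verified Lean document; each statement's English description precedes it below -/
import Mathlib

section
/- The subgroup G_I of GL(5,ℝ) generated by the three Minkowski reflections r_{i₀}, r_{i₁}, r_{i₂} is isomorphic to the symmetric group S₄; in particular it is finite of order 24. -/
noncomputable section

open Real

/-- The Minkowski bilinear form of signature (1,4) on `ℝ^5`. -/
def B (x y : Fin 5 → ℝ) : ℝ :=
  -(x 0 * y 0) + x 1 * y 1 + x 2 * y 2 + x 3 * y 3 + x 4 * y 4

/-- The Kerckhoff–Storm vector `t`. -/
def vt : Fin 5 → ℝ := ![Real.sqrt 2, 1, 1, 1, Real.sqrt 7]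
/-- The Kerckhoff–Storm vector `b`. -/
def vb : Fin 5 → ℝ := ![Real.sqrt 2, 1, 1, -1, -Real.sqrt 7]
/-- The Kerckhoff–Storm vector `u`. -/
def vu : Fin 5 → ℝ := ![Real.sqrt 2, 1, 1, 1, -(Real.sqrt 7 / 7)]
/-- The Kerckhoff–Storm vector `ℓ`. -/
def vl : Fin 5 → ℝ := ![Real.sqrt 2, 1, 1, -1, Real.sqrt 7 / 7]
/-- The Kerckhoff–Storm vector `c`. -/
def vc : Fin 5 → ℝ := ![1, Real.sqrt 2, 0, 0, 0]
/-- The Kerckhoff–Storm vector `i₀`. -/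
def vi0 : Fin 5 → ℝ := ![0, -1, 1, 0, 0]
/-- The Kerckhoff–Storm vector `i₁`. -/
def vi1 : Fin 5 → ℝ := ![0, 0, -1, -1, 0]
/-- The Kerckhoff–Storm vector `i₂`. -/
def vi2 : Fin 5 → ℝ := ![0, 0, -1, 1, 0]

/-- The Minkowski reflection along a vector `v` with `B v v ≠ 0`. -/
def mrefl (v : Fin 5 → ℝ) (x : Fin 5 → ℝ) : Fin 5 → ℝ :=
  x - (2 * (B x v / B v v)) • v

/-!
The vectors `½(0, -1, -1, 1, 1)`, `½(0, -1, 1, -1, 1)`, `½(0, 1, -1, -1, 1)`, `½(0, 1, 1, 1, 1)` are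
orthonormal for `B`, and `i₂`, `i₀`, `i₁` are the differences of consecutive ones. Reflecting in the
difference of two members of an orthonormal family exchanges them and fixes the orthogonal
complement of their span, so `r_{i₂}`, `r_{i₀}`, `r_{i₁}` are the images of the adjacent
transpositions under the faithful representation of `S₄` permuting the four vectors.
-/

section Biorthogonal

variable {ι R M : Type*} [CommRing R] [AddCommGroup M] [Module R M]
  {f : ι → M} {φ : ι → Module.Dual R M}

/-- A family of vectors `f` and a family of functionals `φ` are biorthogonal if `φ i (f j) = δᵢⱼ`.
Neither family is required to span. -/
def IsBiorthogonal [DecidableEq ι] (f : ι → M) (φ : ι → Module.Dual R M) : Prop :=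
  ∀ i j, φ i (f j) = if i = j then 1 else 0

lemma IsBiorthogonal.injective [DecidableEq ι] [Nontrivial R] (h : IsBiorthogonal f φ) :
    Function.Injective f := by
  intro i j hij
  by_contra hne
  have hone : φ i (f j) = 1 := by rw [← hij, h, if_pos rfl]
  rw [h, if_neg hne] at hone
  exact zero_ne_one hone

variable [Fintype ι]

/-- The endomorphism of `M` which, for biorthogonal `f` and `φ`, sends each `f i` to `f (σ i)` and
fixes the common kernel of the functionals `φ i`. -/
def permEnd (f : ι → M) (φ : ι → Module.Dual R M) (σ : Equiv.Perm ι) : Module.End R M :=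
  LinearMap.id + ∑ k, (φ k).smulRight (f (σ k) - f k)

lemma permEnd_apply (σ : Equiv.Perm ι) (x : M) :
    permEnd f φ σ x = x + ∑ k, φ k x • (f (σ k) - f k) := by
  simp only [permEnd, LinearMap.add_apply, LinearMap.id_apply, LinearMap.sum_apply,
    LinearMap.smulRight_apply]

namespace IsBiorthogonal

variable [DecidableEq ι]

lemma dual_permEnd_apply (h : IsBiorthogonal f φ) (σ : Equiv.Perm ι) (i : ι) (x : M) :
    φ i (permEnd f φ σ x) = φ (σ⁻¹ i) x := by
  simp only [permEnd_apply, map_add, map_sum, map_smul, map_sub, h i, smul_eq_mul, mul_sub, mul_ite,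
    mul_one, mul_zero, Finset.sum_sub_distrib, ← Equiv.Perm.inv_eq_iff_eq, Finset.sum_ite_eq,
    Finset.mem_univ, if_true]
  exact add_sub_cancel _ _

/-- The representation of `Equiv.Perm ι` on `M` by the endomorphisms `permEnd f φ σ`, which permute
the vectors of the biorthogonal pair. -/
def permRep (h : IsBiorthogonal f φ) : Equiv.Perm ι →* Module.End R M where
  toFun := permEnd f φ
  map_one' := by ext x; simp [permEnd_apply]
  map_mul' σ τ := by
    ext x
    have reindex : ∑ k, φ (τ⁻¹ k) x • (f (σ k) - f k) =
        ∑ k, φ k x • (f (σ (τ k)) - f (τ k)) := by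
      rw [← Equiv.sum_comp τ]
      simp only [Equiv.Perm.inv_def, Equiv.symm_apply_apply]
    rw [Module.End.mul_apply, permEnd_apply σ]
    simp only [h.dual_permEnd_apply]
    rw [reindex, permEnd_apply, permEnd_apply, add_assoc, ← Finset.sum_add_distrib]
    simp only [← smul_add, sub_add_sub_cancel', Equiv.Perm.mul_apply]

lemma permRep_apply (h : IsBiorthogonal f φ) (σ : Equiv.Perm ι) (x : M) :
    h.permRep σ x = x + ∑ k, φ k x • (f (σ k) - f k) :=
  permEnd_apply σ x

lemma permRep_apply_self (h : IsBiorthogonal f φ) (σ : Equiv.Perm ι) (i : ι) :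
    h.permRep σ (f i) = f (σ i) := by
  simp [permRep_apply, h _ i]

lemma permRep_injective [Nontrivial R] (h : IsBiorthogonal f φ) :
    Function.Injective h.permRep := by
  intro σ τ hστ
  ext i
  apply h.injective
  rw [← h.permRep_apply_self, hστ, h.permRep_apply_self]

lemma permRep_swap_apply (h : IsBiorthogonal f φ) {i j : ι} (hij : i ≠ j) (x : M) :
    h.permRep (Equiv.swap i j) x = x - (φ i x - φ j x) • (f i - f j) := by
  have hsupp : ∀ k, k ≠ i ∧ k ≠ j → φ k x • (f (Equiv.swap i j k) - f k) = 0 := by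
    rintro k ⟨hki, hkj⟩
    rw [Equiv.swap_apply_of_ne_of_ne hki hkj, sub_self, smul_zero]
  rw [permRep_apply, Fintype.sum_eq_add i j hij hsupp, Equiv.swap_apply_left,
    Equiv.swap_apply_right]
  module

end IsBiorthogonal

end Biorthogonal

section AdjacentSwaps

variable {G : Type*} [Group G] {n : ℕ}

lemma closure_range_map_swap_castSucc_succ (ρ : Equiv.Perm (Fin (n + 1)) →* G) :
    Subgroup.closure (Set.range fun k : Fin n ↦ ρ (Equiv.swap k.castSucc k.succ)) = ρ.range := by
  have htop : Subgroup.closure (Set.range fun k : Fin n ↦ Equiv.swap k.castSucc k.succ) = ⊤ :=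
    Subgroup.closure_eq_top_of_mclosure_eq_top (Equiv.Perm.mclosure_swap_castSucc_succ n)
  rw [MonoidHom.range_eq_map, ← htop, MonoidHom.map_closure, ← Set.range_comp']

/-- The isomorphism from the group generated by the images of the adjacent transpositions under an
injective homomorphism `ρ` to the symmetric group, inverse to the corestriction of `ρ`. -/
def closureMapSwapEquivPerm {ρ : Equiv.Perm (Fin (n + 1)) →* G} (hρ : Function.Injective ρ) :
    Subgroup.closure (Set.range fun k : Fin n ↦ ρ (Equiv.swap k.castSucc k.succ)) ≃*
      Equiv.Perm (Fin (n + 1)) :=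
  (MulEquiv.subgroupCongr (closure_range_map_swap_castSucc_succ ρ)).trans
    (MonoidHom.ofInjective hρ).symm

end AdjacentSwaps

section Minkowski

/-- The form `B` as a bundled bilinear map, so that `minkowskiForm.flip v` is the functional
`x ↦ B x v` that enters `mrefl v`. -/
def minkowskiForm : LinearMap.BilinForm ℝ (Fin 5 → ℝ) :=
  LinearMap.mk₂ ℝ B
    (fun x x' y ↦ by simp only [B, Pi.add_apply]; ring)
    (fun a x y ↦ by simp only [B, Pi.smul_apply, smul_eq_mul]; ring)
    (fun x y y' ↦ by simp only [B, Pi.add_apply]; ring)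
    (fun a x y ↦ by simp only [B, Pi.smul_apply, smul_eq_mul]; ring)

lemma minkowskiForm_apply (x y : Fin 5 → ℝ) : minkowskiForm x y = B x y := rfl

lemma B_sub_left (x y z : Fin 5 → ℝ) : B (x - y) z = B x z - B y z :=
  map_sub (minkowskiForm.flip z) x y

lemma B_sub_right (x y z : Fin 5 → ℝ) : B x (y - z) = B x y - B x z :=
  map_sub (minkowskiForm x) y z

lemma permRep_swap_eq_mrefl {ι : Type*} [DecidableEq ι] [Fintype ι] {f : ι → Fin 5 → ℝ}
    (h : IsBiorthogonal f fun i ↦ minkowskiForm.flip (f i)) {i j : ι} (hij : i ≠ j)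
    (x : Fin 5 → ℝ) : h.permRep (Equiv.swap i j) x = mrefl (f i - f j) x := by
  have hB (k l : ι) : B (f k) (f l) = if l = k then 1 else 0 := h l k
  have hnorm : B (f i - f j) (f i - f j) = 2 := by
    simp only [B_sub_left, B_sub_right, hB, if_pos, if_neg hij, if_neg hij.symm]
    norm_num
  rw [h.permRep_swap_apply hij, mrefl, hnorm, mul_div_cancel₀ _ two_ne_zero, B_sub_right]
  simp only [LinearMap.BilinForm.flip_apply, minkowskiForm_apply]

/-- The four `B`-orthonormal vectors that the group permutes. Their projections to the coordinates
`1, 2, 3` are the vertices of a regular tetrahedron. The common coordinate `4` makes them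
orthogonal, and the order is chosen so that consecutive differences are `vi2`, `vi0`, `vi1`. -/
def tetrahedralFrame (k : Fin 4) : Fin 5 → ℝ :=
  (1 / 2 : ℝ) • (![![0, -1, -1, 1, 1], ![0, -1, 1, -1, 1], ![0, 1, -1, -1, 1], ![0, 1, 1, 1, 1]] k)

lemma isBiorthogonal_tetrahedralFrame :
    IsBiorthogonal tetrahedralFrame fun k ↦ minkowskiForm.flip (tetrahedralFrame k) := by
  intro i j
  rw [LinearMap.BilinForm.flip_apply, minkowskiForm_apply]
  fin_cases i <;> fin_cases j <;> simp [B, tetrahedralFrame] <;> norm_num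

lemma tetrahedralFrame_castSucc_sub_succ (k : Fin 3) :
    tetrahedralFrame k.castSucc - tetrahedralFrame k.succ = ![vi2, vi0, vi1] k := by
  ext i
  fin_cases k <;> fin_cases i <;> norm_num [tetrahedralFrame, vi0, vi1, vi2, Fin.succ]

lemma permRep_tetrahedralFrame_swap (k : Fin 3) (x : Fin 5 → ℝ) :
    isBiorthogonal_tetrahedralFrame.permRep (Equiv.swap k.castSucc k.succ) x =
      mrefl (![vi2, vi0, vi1] k) x := by
  rw [permRep_swap_eq_mrefl _ Fin.castSucc_lt_succ.ne, tetrahedralFrame_castSucc_sub_succ]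

end Minkowski

/-- The subgroup of `GL(5,ℝ)` generated by the Minkowski reflections
`r_{i₀}, r_{i₁}, r_{i₂}` is isomorphic to the symmetric group `S₄`;
in particular it is finite of order 24. -/
theorem subgroup_GI_iso_S4 (g₀ g₁ g₂ : ((Fin 5 → ℝ) →ₗ[ℝ] (Fin 5 → ℝ))ˣ)
    (h₀ : ∀ x, g₀.val x = mrefl vi0 x)
    (h₁ : ∀ x, g₁.val x = mrefl vi1 x)
    (h₂ : ∀ x, g₂.val x = mrefl vi2 x) :
    Nonempty ((Subgroup.closure {g₀, g₁, g₂} :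
        Subgroup ((Fin 5 → ℝ) →ₗ[ℝ] (Fin 5 → ℝ))ˣ) ≃* Equiv.Perm (Fin 4)) ∧
      Nat.card (Subgroup.closure {g₀, g₁, g₂} :
        Subgroup ((Fin 5 → ℝ) →ₗ[ℝ] (Fin 5 → ℝ))ˣ) = 24 := by
  let ρ := isBiorthogonal_tetrahedralFrame.permRep.toHomUnits
  have hρ : Function.Injective ρ := fun σ τ hστ ↦
    isBiorthogonal_tetrahedralFrame.permRep_injective (congrArg Units.val hστ)
  have hswap (k : Fin 3) : ρ (Equiv.swap k.castSucc k.succ) = ![g₂, g₀, g₁] k := by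
    ext1
    refine LinearMap.ext fun x ↦ (permRep_tetrahedralFrame_swap k x).trans ?_
    fin_cases k
    exacts [(h₂ x).symm, (h₀ x).symm, (h₁ x).symm]
  have hgen : {g₀, g₁, g₂} = Set.range fun k : Fin 3 ↦ ρ (Equiv.swap k.castSucc k.succ) := by
    simp only [hswap, Matrix.range_cons, Matrix.range_empty, Set.union_empty]
    grind
  rw [hgen]
  let e := closureMapSwapEquivPerm hρ
  refine ⟨⟨e⟩, ?_⟩
  rw [Nat.card_congr e.toEquiv, Nat.card_perm, Nat.card_fin]
  rfl
end
end

section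
/- The matrix A is congruent over ℝ to diag(1, 1, 1, 1, -1): there exists an invertible 5×5 real matrix P with Pᵀ · A · P = diag(1, 1, 1, 1, -1). Equivalently, the quadratic form with matrix A has signature (4,1), i.e., it is a quadratic form of hyperbolic (Lorentzian) signature over ℚ. -/
noncomputable section

/-- The matrix over `ℚ` of the quadratic form associated to the arithmetic reflection
group `Γ` of the Kerckhoff–Storm Coxeter polytope `Q`. -/
def A : Matrix (Fin 5) (Fin 5) ℚ :=
  !![7, 0, 0, 7/2, 0;
     0, 1, -1, 0, 0;
     0, -1, 1, -1/2, -1/2;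
     7/2, 0, -1/2, 1, 0;
     0, 0, -1/2, 0, 1]

open scoped Matrix

section Congruence

variable {n R S : Type*} [Fintype n] [DecidableEq n]

/-- Congruence of square matrices: `M` and `N` are Gram matrices of the same bilinear form in two
bases related by the invertible change-of-basis matrix `P`. -/
def IsCongruent [CommSemiring R] (M N : Matrix n n R) : Prop :=
  ∃ P : Matrix n n R, IsUnit P ∧ Pᵀ * M * P = N

theorem IsCongruent.trans [CommSemiring R] {L M N : Matrix n n R}
    (hLM : IsCongruent L M) (hMN : IsCongruent M N) : IsCongruent L N := by
  obtain ⟨P, hP, rfl⟩ := hLM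
  obtain ⟨Q, hQ, rfl⟩ := hMN
  exact ⟨P * Q, hP.mul hQ, by simp only [Matrix.transpose_mul, Matrix.mul_assoc]⟩

theorem IsCongruent.map [CommSemiring R] [CommSemiring S] {M N : Matrix n n R}
    (h : IsCongruent M N) (f : R →+* S) : IsCongruent (M.map f) (N.map f) := by
  obtain ⟨P, hP, rfl⟩ := h
  exact ⟨P.map f, hP.map f.mapMatrix, by simp only [Matrix.map_mul, Matrix.transpose_map]⟩

theorem isCongruent_of_transpose_mul_mul_eq [CommRing R] {M N P : Matrix n n R}
    (hN : IsUnit N) (h : Pᵀ * M * P = N) : IsCongruent M N :=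
  ⟨P, isUnit_of_mul_isUnit_right (h ▸ hN), h⟩

theorem isCongruent_diagonal_of_units_sq_mul [CommSemiring R] {d e : n → R} (u : n → Rˣ)
    (h : ∀ i, (u i : R) ^ 2 * d i = e i) :
    IsCongruent (Matrix.diagonal d) (Matrix.diagonal e) := by
  refine ⟨Matrix.diagonal fun i ↦ (u i : R), ?_, ?_⟩
  · exact (Pi.isUnit_iff.mpr fun i ↦ (u i).isUnit).map (Matrix.diagonalRingHom n R)
  · simp only [Matrix.diagonal_transpose, Matrix.diagonal_mul_diagonal]
    exact congrArg Matrix.diagonal <| funext fun i ↦ by rw [← h i]; ring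

end Congruence

theorem exists_units_sq_mul_eq_sign (x : ℝ) :
    ∃ u : ℝˣ, (u : ℝ) ^ 2 * x = SignType.sign x := by
  rcases eq_or_ne x 0 with rfl | hx
  · exact ⟨1, by simp⟩
  · have h_abs : |x| ≠ 0 := abs_ne_zero.mpr hx
    refine ⟨(Units.mk0 √|x| (Real.sqrt_ne_zero'.mpr (abs_pos.mpr hx)))⁻¹, ?_⟩
    rw [Units.val_inv_eq_inv_val, Units.val_mk0, inv_pow, Real.sq_sqrt (abs_nonneg x),
      inv_mul_eq_iff_eq_mul₀ h_abs, abs_mul_sign]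

section RealDiagonalization

variable {n : Type*} [Fintype n] [DecidableEq n]

theorem isCongruent_diagonal_sign (d : n → ℝ) :
    IsCongruent (Matrix.diagonal d) (Matrix.diagonal fun i ↦ (SignType.sign (d i) : ℝ)) := by
  choose u hu using fun i ↦ exists_units_sq_mul_eq_sign (d i)
  exact isCongruent_diagonal_of_units_sq_mul u hu

theorem IsCongruent.ratCast_diagonal_sign {M : Matrix n n ℚ} {d : n → ℚ}
    (h : IsCongruent M (Matrix.diagonal d)) :
    IsCongruent (M.map (Rat.cast : ℚ → ℝ))
      (Matrix.diagonal fun i ↦ (SignType.sign (d i) : ℝ)) := by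
  have h_real : IsCongruent (M.map (Rat.cast : ℚ → ℝ)) (Matrix.diagonal fun i ↦ (d i : ℝ)) := by
    simpa [Matrix.diagonal_map] using h.map (Rat.castHom ℝ)
  have h_sign (q : ℚ) : SignType.sign (q : ℝ) = SignType.sign q :=
    Rat.cast_strictMono.sign_comp (f := Rat.castHom ℝ) q
  simpa only [h_sign] using h_real.trans (isCongruent_diagonal_sign _)

end RealDiagonalization

/-- An `A`-orthogonal basis of `ℚ⁵`, as the columns of a matrix. It is obtained by Gram–Schmidt
from `e₁, e₂, e₅, e₃, e₄`: the last two orthogonalized vectors are doubled to clear denominators,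
and then swapped so that the vector of negative norm comes last. -/
def orthogonalBasisMatrix : Matrix (Fin 5) (Fin 5) ℚ :=
  !![1, 0, 0, -1, 0;
     0, 1, 0, -4, 2;
     0, 0, 0, -4, 2;
     0, 0, 0, 2, 0;
     0, 0, 1, -2, 1]

theorem orthogonalBasisMatrix_transpose_mul_A_mul :
    orthogonalBasisMatrixᵀ * A * orthogonalBasisMatrix = Matrix.diagonal ![7, 1, 1, 1, -1] := by
  ext i j
  fin_cases i <;> fin_cases j <;>
    simp [orthogonalBasisMatrix, A, Matrix.mul_apply, Fin.sum_univ_five] <;> ring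

theorem A_isCongruent_rational_diagonal :
    IsCongruent A (Matrix.diagonal ![7, 1, 1, 1, -1]) := by
  refine isCongruent_of_transpose_mul_mul_eq ?_ orthogonalBasisMatrix_transpose_mul_A_mul
  simp [Matrix.isUnit_diagonal, Pi.isUnit_iff, Fin.forall_fin_succ]

/-- The matrix `A` is congruent over `ℝ` to `diag(1,1,1,1,-1)`: the associated quadratic
form has hyperbolic (Lorentzian) signature `(4,1)`. -/
theorem A_congruent_to_lorentzian_diagonal :
    ∃ P : Matrix (Fin 5) (Fin 5) ℝ, IsUnit P ∧
      P.transpose * (A.map (Rat.cast : ℚ → ℝ)) * P =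
        Matrix.diagonal ![1, 1, 1, 1, -1] := by
  have h_signs : (fun i ↦ (SignType.sign ((![7, 1, 1, 1, -1] : Fin 5 → ℚ) i) : ℝ)) =
      ![1, 1, 1, 1, -1] := by
    simp [funext_iff, Fin.forall_fin_succ]
  exact h_signs ▸ A_isCongruent_rational_diagonal.ratCast_diagonal_sign
end
end
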